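/- Let E be an Archimedean Riesz space and let I ⊆ E be an ideal that is finite dimensional as a real vector space. Then I is a projection band of E, and moreover I is a principal band (the band generated by a single element of E). -/

import Mathlib

/-- A (Riesz) ideal of an ordered real vector space: a submodule `I` such that
`|x| ≤ |y|` and `y ∈ I` imply `x ∈ I`. -/
def IsRieszIdeal {E : Type*} [AddCommGroup E] [Lattice E] [Module ℝ E]
    (I : Submodule ℝ E) : Prop :=
  ∀ x y : E, |x| ≤ |y| → y ∈ I → x ∈ I

/-- A band: an ideal closed under suprema of its subsets (when they exist in `E`). -/
def IsBand {E : Type*} [AddCommGroup E] [Lattice E] [Module ℝ E]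
    (B : Submodule ℝ E) : Prop :=
  IsRieszIdeal B ∧ ∀ (D : Set E) (x : E), D ⊆ (B : Set E) → IsLUB D x → x ∈ B

/-- The disjoint complement of a set `D`. -/
def disjComplement {E : Type*} [AddCommGroup E] [Lattice E] (D : Set E) : Set E :=
  {x : E | ∀ y ∈ D, |x| ⊓ |y| = 0}

/-- A projection band: a band `B` with `E = B ⊕ Bᵈ`. -/
def IsProjectionBand {E : Type*} [AddCommGroup E] [Lattice E] [Module ℝ E]
    (B : Submodule ℝ E) : Prop :=
  IsBand B ∧ ∀ x : E, ∃ y ∈ B, ∃ z ∈ disjComplement (B : Set E), x = y + z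

/-- An order direct sum decomposition `E = L ⊕ M`: every element decomposes uniquely
as a sum of an element of `L` and an element of `M`, and an element is positive iff
both its components are positive. -/
def IsOrderDecomposition {E : Type*} [AddCommGroup E] [Lattice E] [Module ℝ E]
    (L M : Submodule ℝ E) : Prop :=
  (∀ x : E, ∃ y ∈ L, ∃ z ∈ M, x = y + z) ∧
  (∀ x : E, x ∈ L → x ∈ M → x = 0) ∧
  (∀ y z : E, y ∈ L → z ∈ M → (0 ≤ y + z ↔ 0 ≤ y ∧ 0 ≤ z))

/-- A homomorphism `ρ : G →* (E ≃ₗ[ℝ] E)` is a positive representation when each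
`ρ s` is an order isomorphism (hence a lattice automorphism). -/
def IsPositiveRep {E : Type*} [AddCommGroup E] [Lattice E] [Module ℝ E]
    {G : Type*} [Group G] (ρ : G →* (E ≃ₗ[ℝ] E)) : Prop :=
  ∀ (s : G) (x y : E), x ≤ y ↔ ρ s x ≤ ρ s y

/-- A submodule is `ρ`-invariant if it is mapped into itself by every `ρ s`. -/
def InvariantSubmodule {E : Type*} [AddCommGroup E] [Lattice E] [Module ℝ E]
    {G : Type*} [Group G] (ρ : G →* (E ≃ₗ[ℝ] E)) (B : Submodule ℝ E) : Prop :=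
  ∀ (s : G), ∀ x ∈ B, ρ s x ∈ B

/-- `ρ` is order indecomposable if the only `ρ`-invariant order direct sum
decompositions `E = L ⊕ M` are the trivial ones. -/
def OrderIndecomposable {E : Type*} [AddCommGroup E] [Lattice E] [Module ℝ E]
    {G : Type*} [Group G] (ρ : G →* (E ≃ₗ[ℝ] E)) : Prop :=
  ∀ L M : Submodule ℝ E, IsOrderDecomposition L M →
    InvariantSubmodule ρ L → InvariantSubmodule ρ M → L = ⊥ ∨ L = ⊤

/-- `ρ` is projection band irreducible if the only `ρ`-invariant projection bands
are `{0}` and `E`. -/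
def ProjectionBandIrreducible {E : Type*} [AddCommGroup E] [Lattice E] [Module ℝ E]
    {G : Type*} [Group G] (ρ : G →* (E ≃ₗ[ℝ] E)) : Prop :=
  ∀ B : Submodule ℝ E, IsProjectionBand B → InvariantSubmodule ρ B → B = ⊥ ∨ B = ⊤


/-- A principal band: the band generated by a single element, i.e. the smallest band
containing some element `x`. -/
def IsPrincipalBand {E : Type*} [AddCommGroup E] [Lattice E] [Module ℝ E]
    (B : Submodule ℝ E) : Prop :=
  IsBand B ∧ ∃ x ∈ B, ∀ C : Submodule ℝ E, IsBand C → x ∈ C → B ≤ C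

/-- `E` is Archimedean: if `0 ≤ n • x ≤ y` for all positive integers `n`, then `x = 0`. -/
def RieszArchimedean (E : Type*) [AddCommGroup E] [Lattice E] [Module ℝ E] : Prop :=
  ∀ x y : E, (∀ n : ℕ, 0 < n → 0 ≤ n • x ∧ n • x ≤ y) → x = 0

/-!
A positive element `a` spanning a line that contains the whole interval `[0, a]` splits off:
taking the largest `c` with `c • a ≤ x`, which exists by the Archimedean property, leaves a
remainder `x - c • a` disjoint from `a`. A minimal nonzero ideal is totally ordered, because the
elements of the ideal disjoint from `u⁻` form an ideal containing `u⁺`, which is either zero or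
contains `u⁻`; by the Archimedean property it is then a line of this kind. Splitting off such lines
one at a time shows that a finite dimensional ideal is spanned by finitely many pairwise disjoint
atoms. Subtracting from `x` its components along these atoms leaves the part of `x` disjoint from
the ideal, and the sum of the atoms generates the ideal.
-/

section LatticeOrderedGroup

variable {E : Type*} [AddCommGroup E] [Lattice E]

lemma mem_disjComplement_singleton {x y : E} : x ∈ disjComplement {y} ↔ |x| ⊓ |y| = 0 := by
  simp only [disjComplement, Set.mem_ofPred_eq, Set.mem_singleton_iff, forall_eq]

lemma subset_disjComplement_comm {C D : Set E} :
    C ⊆ disjComplement D ↔ D ⊆ disjComplement C :=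
  ⟨fun h y hy _ hx ↦ (inf_comm _ _).trans (h hx y hy),
    fun h x hx _ hy ↦ (inf_comm _ _).trans (h hy x hx)⟩

variable [IsOrderedAddMonoid E]

lemma abs_eq_zero_iff {x : E} : |x| = 0 ↔ x = 0 :=
  ⟨fun h ↦ le_antisymm (h ▸ le_abs_self x) (neg_nonpos.1 (h ▸ neg_le_abs x)),
    fun h ↦ by rw [h, abs_zero]⟩

lemma add_inf_le_inf_add_inf {a b c : E} (ha : 0 ≤ a) (hb : 0 ≤ b) (hc : 0 ≤ c) :
    (a + b) ⊓ c ≤ a ⊓ c + b ⊓ c := by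
  rw [inf_add, add_inf, add_inf]
  exact le_inf (le_inf inf_le_left (inf_le_right.trans (le_add_of_nonneg_left ha)))
    (le_inf (inf_le_right.trans (le_add_of_nonneg_right hb))
      (inf_le_right.trans (le_add_of_nonneg_right hc)))

lemma eq_zero_of_mem_disjComplement {D : Set E} {x : E} (hx : x ∈ D)
    (hxD : x ∈ disjComplement D) : x = 0 := by
  simpa only [inf_idem, abs_eq_zero_iff] using hxD x hx

lemma mem_disjComplement_of_abs_le {D : Set E} {x y : E} (hxy : |x| ≤ |y|)
    (hy : y ∈ disjComplement D) : x ∈ disjComplement D := fun w hw ↦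
  le_antisymm ((inf_le_inf_right _ hxy).trans (hy w hw).le) (le_inf (abs_nonneg x) (abs_nonneg w))

lemma add_mem_disjComplement {D : Set E} {x y : E} (hx : x ∈ disjComplement D)
    (hy : y ∈ disjComplement D) : x + y ∈ disjComplement D := fun w hw ↦ by
  refine le_antisymm ?_ (le_inf (abs_nonneg _) (abs_nonneg _))
  calc |x + y| ⊓ |w|
      ≤ (|x| + |y|) ⊓ |w| := inf_le_inf_right _ (abs_add_le x y)
    _ ≤ |x| ⊓ |w| + |y| ⊓ |w| :=
      add_inf_le_inf_add_inf (abs_nonneg x) (abs_nonneg y) (abs_nonneg w)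
    _ = 0 := by rw [hx w hw, hy w hw, add_zero]

lemma posPart_mem_disjComplement_negPart (u : E) : u⁺ ∈ disjComplement {u⁻} := by
  rw [mem_disjComplement_singleton, abs_of_nonneg (posPart_nonneg u),
    abs_of_nonneg (negPart_nonneg u), posPart_inf_negPart_eq_zero]

end LatticeOrderedGroup

namespace IsRieszIdeal

variable {E : Type*} [AddCommGroup E] [Lattice E] [Module ℝ E] {I J : Submodule ℝ E}

lemma inf (hI : IsRieszIdeal I) (hJ : IsRieszIdeal J) : IsRieszIdeal (I ⊓ J) :=
  fun x y hxy hy ↦ ⟨hI x y hxy hy.1, hJ x y hxy hy.2⟩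

variable [IsOrderedAddMonoid E]

lemma abs_mem (hI : IsRieszIdeal I) {x : E} (hx : x ∈ I) : |x| ∈ I :=
  hI _ x (abs_abs x).le hx

lemma mem_of_nonneg_of_le (hI : IsRieszIdeal I) {x y : E} (hx : 0 ≤ x) (hxy : x ≤ y)
    (hy : y ∈ I) : x ∈ I :=
  hI x y (abs_le_abs_of_nonneg hx hxy) hy

lemma posPart_mem (hI : IsRieszIdeal I) {x : E} (hx : x ∈ I) : x⁺ ∈ I :=
  hI.mem_of_nonneg_of_le (posPart_nonneg x) (sup_le (le_abs_self x) (abs_nonneg x)) (hI.abs_mem hx)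

lemma negPart_mem (hI : IsRieszIdeal I) {x : E} (hx : x ∈ I) : x⁻ ∈ I := by
  simpa only [posPart_neg] using hI.posPart_mem (I.neg_mem hx)

lemma mem_of_le_of_le (hI : IsRieszIdeal I) {x y z : E} (hx : x ∈ I) (hz : z ∈ I)
    (hxy : x ≤ y) (hyz : y ≤ z) : y ∈ I := by
  have hsub : y - x ∈ I := hI.mem_of_nonneg_of_le (sub_nonneg.2 hxy)
    (sub_le_sub_right hyz x) (I.sub_mem hz hx)
  simpa only [sub_add_cancel] using I.add_mem hsub hx

lemma span_le_of_sum_mem (hI : IsRieszIdeal I) {s : Finset E} (hs : ∀ a ∈ s, 0 ≤ a)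
    (hsum : ∑ a ∈ s, a ∈ I) : Submodule.span ℝ (s : Set E) ≤ I :=
  Submodule.span_le.2 fun a ha ↦
    hI.mem_of_nonneg_of_le (hs a ha) (Finset.single_le_sum hs ha) hsum

lemma le_of_le_add_of_mem_disjComplement (hI : IsRieszIdeal I) {d y z : E} (hd : d ∈ I)
    (hy : y ∈ I) (hz : z ∈ disjComplement (I : Set E)) (h : d ≤ y + z) : d ≤ y := by
  have hle : (d - y)⁺ ≤ |z| :=
    sup_le ((sub_le_iff_le_add'.2 h).trans (le_abs_self z)) (abs_nonneg z)
  have hdisj : |z| ⊓ (d - y)⁺ = 0 := by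
    simpa only [abs_of_nonneg (posPart_nonneg (d - y))] using
      hz _ (hI.posPart_mem (I.sub_mem hd hy))
  rw [inf_eq_right.2 hle, posPart_eq_zero] at hdisj
  exact sub_nonpos.1 hdisj

lemma isBand_of_forall_exists_add (hI : IsRieszIdeal I)
    (h : ∀ x : E, ∃ y ∈ I, ∃ z ∈ disjComplement (I : Set E), x = y + z) : IsBand I := by
  refine ⟨hI, fun D x hDI hDx ↦ ?_⟩
  rcases D.eq_empty_or_nonempty with rfl | ⟨d, hd⟩
  · have hbot : ∀ y, x ≤ y := isLUB_empty_iff.1 hDx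
    have hx : 0 ≤ x := le_add_iff_nonneg_left x |>.1 (hbot (x + x))
    rw [le_antisymm (hbot 0) hx]
    exact I.zero_mem
  · obtain ⟨y, hy, z, hz, rfl⟩ := h x
    have hub : y ∈ upperBounds D := fun d hd ↦
      hI.le_of_le_add_of_mem_disjComplement (hDI hd) hy hz (hDx.1 hd)
    exact hI.mem_of_le_of_le (hDI hd) hy (hDx.1 hd) (hDx.2 hub)

end IsRieszIdeal

section DisjComplementSubmodule

variable {E : Type*} [AddCommGroup E] [Lattice E] [Module ℝ E] [IsOrderedModule ℝ E]

lemma abs_smul_le_abs_smul_abs (c : ℝ) (x : E) : |c • x| ≤ |c| • |x| := by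
  wlog hc : 0 ≤ c generalizing c
  · simpa only [neg_smul, abs_neg] using this (-c) (neg_nonneg.2 (le_of_not_ge hc))
  rw [abs_of_nonneg hc, abs_le', ← smul_neg]
  exact ⟨smul_le_smul_of_nonneg_left (le_abs_self x) hc,
    smul_le_smul_of_nonneg_left (neg_le_abs x) hc⟩

variable [IsOrderedAddMonoid E] {D : Set E}

lemma smul_mem_disjComplement (c : ℝ) {x : E} (hx : x ∈ disjComplement D) :
    c • x ∈ disjComplement D := fun w hw ↦ by
  let m : ℝ := |c| ⊔ 1
  have hm : 0 < m := zero_lt_one.trans_le le_sup_right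
  have hcx : |c • x| ≤ m • |x| :=
    (abs_smul_le_abs_smul_abs c x).trans
      (smul_le_smul_of_nonneg_right le_sup_left (abs_nonneg x))
  have hw' : |w| ≤ m • |w| := le_smul_of_one_le_left (abs_nonneg w) le_sup_right
  refine le_antisymm ?_ (le_inf (abs_nonneg _) (abs_nonneg _))
  calc |c • x| ⊓ |w|
      ≤ m • |x| ⊓ m • |w| := inf_le_inf hcx hw'
    _ = m • (|x| ⊓ |w|) := ((OrderIso.smulRight hm).map_inf _ _).symm
    _ = 0 := by rw [hx w hw, smul_zero]

/-- The disjoint complement of `D`, bundled as a linear subspace so that it can be intersected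
with ideals and compared with spans. -/
def disjComplementSubmodule (D : Set E) : Submodule ℝ E where
  carrier := disjComplement D
  add_mem' := add_mem_disjComplement
  zero_mem' w _ := by rw [abs_zero, inf_eq_left.2 (abs_nonneg w)]
  smul_mem' c _ := smul_mem_disjComplement c

lemma isRieszIdeal_disjComplementSubmodule (D : Set E) :
    IsRieszIdeal (disjComplementSubmodule D) :=
  fun _ _ ↦ mem_disjComplement_of_abs_le

lemma disjComplement_span (D : Set E) :
    disjComplement (Submodule.span ℝ D : Set E) = disjComplement D := by
  refine Set.Subset.antisymm (fun x hx w hw ↦ hx w (Submodule.subset_span hw)) ?_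
  rw [subset_disjComplement_comm]
  exact Submodule.span_le (p := disjComplementSubmodule (disjComplement D)).2
    (subset_disjComplement_comm.1 subset_rfl)

end DisjComplementSubmodule

section Archimedean

variable {E : Type*} [AddCommGroup E] [Lattice E] [Module ℝ E] [IsOrderedAddMonoid E]
  [IsOrderedModule ℝ E] {a x : E}

lemma RieszArchimedean.nonpos_of_forall_le_smul (harch : RieszArchimedean E) (ha : 0 ≤ a)
    (h : ∀ ε : ℝ, 0 < ε → x ≤ ε • a) : x ≤ 0 := by
  refine posPart_eq_zero.1 (harch x⁺ a fun n hn ↦ ⟨nsmul_nonneg (posPart_nonneg x) n, ?_⟩)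
  have hn' : (0 : ℝ) < n := Nat.cast_pos.2 hn
  have hx : x⁺ ≤ (n : ℝ)⁻¹ • a :=
    sup_le (h _ (inv_pos.2 hn')) (smul_nonneg (inv_pos.2 hn').le ha)
  rwa [← Nat.cast_smul_eq_nsmul ℝ, ← le_inv_smul_iff_of_pos hn']

lemma RieszArchimedean.bddAbove_smul_le (harch : RieszArchimedean E) (ha : 0 < a) :
    BddAbove {t : ℝ | t • a ≤ x} := by
  by_contra hb
  refine ha.ne' (harch a x fun n _ ↦ ⟨nsmul_nonneg ha.le n, ?_⟩)
  obtain ⟨t, ht, hnt⟩ := not_bddAbove_iff.1 hb n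
  rw [← Nat.cast_smul_eq_nsmul ℝ]
  exact (smul_le_smul_of_nonneg_right hnt.le ha.le).trans ht

lemma RieszArchimedean.exists_isGreatest_smul_le (harch : RieszArchimedean E) (ha : 0 < a)
    (hx : 0 ≤ x) : ∃ c : ℝ, IsGreatest {t : ℝ | t • a ≤ x} c := by
  set S : Set ℝ := {t | t • a ≤ x}
  have hne : S.Nonempty := ⟨0, (zero_smul ℝ a).trans_le hx⟩
  refine ⟨sSup S, ?_, fun t ht ↦ le_csSup (harch.bddAbove_smul_le ha) ht⟩
  refine sub_nonpos.1 (harch.nonpos_of_forall_le_smul ha.le fun ε hε ↦ ?_)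
  obtain ⟨t, ht, hlt⟩ := exists_lt_of_lt_csSup hne (sub_lt_self (sSup S) hε)
  have hsub : (sSup S - ε) • a ≤ x := (smul_le_smul_of_nonneg_right hlt.le ha.le).trans ht
  rwa [sub_smul, sub_le_comm] at hsub

end Archimedean

/-- An atom of a Riesz space: a positive element whose only minorants in the positive cone are its
scalar multiples. These are the generators of the lines into which a finite dimensional ideal
splits. -/
structure IsRieszAtom {E : Type*} [AddCommGroup E] [Lattice E] [Module ℝ E] (a : E) : Prop where
  pos : 0 < a
  exists_eq_smul : ∀ y : E, 0 ≤ y → y ≤ a → ∃ t : ℝ, y = t • a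

namespace IsRieszAtom

variable {E : Type*} [AddCommGroup E] [Lattice E] [Module ℝ E] [IsOrderedAddMonoid E]
  [IsOrderedModule ℝ E] {a : E}

lemma sub_smul_mem_disjComplement_of_isGreatest (ha : IsRieszAtom a) {x : E} {c : ℝ}
    (hc : IsGreatest {t : ℝ | t • a ≤ x} c) : x - c • a ∈ disjComplement {a} := by
  have hnonneg : 0 ≤ x - c • a := sub_nonneg.2 hc.1
  rw [mem_disjComplement_singleton, abs_of_nonneg hnonneg, abs_of_nonneg ha.pos.le]
  obtain ⟨s, hs⟩ := ha.exists_eq_smul _ (le_inf hnonneg ha.pos.le) inf_le_right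
  have hsc : (s + c) • a ≤ x := by
    rw [add_smul, ← le_sub_iff_add_le, ← hs]
    exact inf_le_left
  have hs0 : s ≤ 0 := by linarith only [hc.2 hsc]
  exact le_antisymm (hs.trans_le (smul_nonpos_of_nonpos_of_nonneg hs0 ha.pos.le))
    (le_inf hnonneg ha.pos.le)

lemma exists_sub_smul_mem_disjComplement (harch : RieszArchimedean E) (ha : IsRieszAtom a)
    (x : E) : ∃ c : ℝ, x - c • a ∈ disjComplement {a} := by
  obtain ⟨c, hc⟩ := harch.exists_isGreatest_smul_le ha.pos (posPart_nonneg x)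
  obtain ⟨d, hd⟩ := harch.exists_isGreatest_smul_le ha.pos (negPart_nonneg x)
  have hsub : (x⁺ - c • a) - (x⁻ - d • a) ∈ disjComplementSubmodule {a} :=
    Submodule.sub_mem _ (ha.sub_smul_mem_disjComplement_of_isGreatest hc)
      (ha.sub_smul_mem_disjComplement_of_isGreatest hd)
  rw [sub_sub_sub_comm, posPart_sub_negPart, ← sub_smul] at hsub
  exact ⟨c - d, hsub⟩

lemma span_sup_disjComplementSubmodule_eq_top (harch : RieszArchimedean E)
    (ha : IsRieszAtom a) : Submodule.span ℝ {a} ⊔ disjComplementSubmodule {a} = ⊤ := by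
  refine eq_top_iff.2 fun x _ ↦ ?_
  obtain ⟨c, hc⟩ := ha.exists_sub_smul_mem_disjComplement harch x
  exact Submodule.mem_sup.2
    ⟨c • a, Submodule.smul_mem _ c (Submodule.mem_span_singleton_self a), x - c • a, hc,
      add_sub_cancel _ _⟩

end IsRieszAtom

lemma exists_mem_span_add_mem_disjComplement_of_isRieszAtom {E : Type*} [AddCommGroup E]
    [Lattice E] [Module ℝ E] [IsOrderedAddMonoid E] [IsOrderedModule ℝ E]
    (harch : RieszArchimedean E) {s : Finset E} (hatom : ∀ a ∈ s, IsRieszAtom a)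
    (hdisj : (s : Set E).Pairwise fun a b ↦ a ∈ disjComplement {b}) (x : E) :
    ∃ y ∈ Submodule.span ℝ (s : Set E),
      ∃ z ∈ disjComplement (Submodule.span ℝ (s : Set E) : Set E), x = y + z := by
  classical
  choose! c hc using fun a (ha : a ∈ s) ↦
    (hatom a ha).exists_sub_smul_mem_disjComplement harch x
  refine ⟨∑ b ∈ s, c b • b, Submodule.sum_mem _ fun b hb ↦
    Submodule.smul_mem _ _ (Submodule.subset_span hb), x - ∑ b ∈ s, c b • b, ?_,
    (add_sub_cancel _ _).symm⟩
  rw [disjComplement_span]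
  intro a ha
  have hrest : ∑ b ∈ s.erase a, c b • b ∈ disjComplementSubmodule {a} :=
    Submodule.sum_mem _ fun b hb ↦ Submodule.smul_mem _ _
      (hdisj (Finset.mem_of_mem_erase hb) ha (Finset.ne_of_mem_erase hb))
  have hsub : (x - c a • a) - ∑ b ∈ s.erase a, c b • b ∈ disjComplementSubmodule {a} :=
    Submodule.sub_mem _ (hc a ha) hrest
  rw [sub_sub, Finset.add_sum_erase s (fun b ↦ c b • b) ha] at hsub
  exact mem_disjComplement_singleton.1 hsub

/-- A minimal nonzero ideal of a Riesz space; the atoms of a finite dimensional ideal are found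
in these. -/
def IsMinimalRieszIdeal {E : Type*} [AddCommGroup E] [Lattice E] [Module ℝ E]
    (I : Submodule ℝ E) : Prop :=
  Minimal (fun J : Submodule ℝ E ↦ IsRieszIdeal J ∧ J ≠ ⊥) I

section MinimalIdeal

variable {E : Type*} [AddCommGroup E] [Lattice E] [Module ℝ E]

lemma IsRieszIdeal.exists_isMinimalRieszIdeal_le {I : Submodule ℝ E} [FiniteDimensional ℝ I]
    (hI : IsRieszIdeal I) (hne : I ≠ ⊥) : ∃ J ≤ I, IsMinimalRieszIdeal J := by
  obtain ⟨J, ⟨hJI, hJ⟩, hmin⟩ := exists_minimalFor_of_wellFoundedLT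
    (fun K : Submodule ℝ E ↦ K ≤ I ∧ IsRieszIdeal K ∧ K ≠ ⊥)
    (fun K ↦ Module.finrank ℝ K) ⟨I, le_rfl, hI, hne⟩
  have : FiniteDimensional ℝ J := Submodule.finiteDimensional_of_le hJI
  refine ⟨J, hJI, hJ, fun K hK hKJ ↦ ?_⟩
  have hrank := hmin ⟨hKJ.trans hJI, hK⟩ (Submodule.finrank_mono hKJ)
  exact (Submodule.eq_of_le_of_finrank_le hKJ hrank).ge

variable [IsOrderedAddMonoid E] [IsOrderedModule ℝ E] {I : Submodule ℝ E}

lemma IsMinimalRieszIdeal.nonpos_or_nonneg (hI : IsMinimalRieszIdeal I) {u : E} (hu : u ∈ I) :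
    u ≤ 0 ∨ 0 ≤ u := by
  by_cases hJ : I ⊓ disjComplementSubmodule {u⁻} = ⊥
  · have hpos : u⁺ ∈ I ⊓ disjComplementSubmodule {u⁻} :=
      ⟨hI.1.1.posPart_mem hu, posPart_mem_disjComplement_negPart u⟩
    rw [hJ, Submodule.mem_bot] at hpos
    exact .inl (posPart_eq_zero.1 hpos)
  · have hle : I ≤ I ⊓ disjComplementSubmodule {u⁻} :=
      hI.2 ⟨hI.1.1.inf (isRieszIdeal_disjComplementSubmodule _), hJ⟩ inf_le_left
    have hneg : u⁻ = 0 := eq_zero_of_mem_disjComplement (Set.mem_singleton _)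
      (hle (hI.1.1.negPart_mem hu)).2
    exact .inr (negPart_eq_zero.1 hneg)

lemma IsMinimalRieszIdeal.exists_eq_smul (harch : RieszArchimedean E)
    (hI : IsMinimalRieszIdeal I) {a y : E} (ha : 0 < a) (haI : a ∈ I) (hy : 0 ≤ y) (hyI : y ∈ I) :
    ∃ t : ℝ, y = t • a := by
  obtain ⟨c, hc⟩ := harch.exists_isGreatest_smul_le ha hy
  refine ⟨c, le_antisymm (sub_nonpos.1 ?_) hc.1⟩
  refine harch.nonpos_of_forall_le_smul ha.le fun ε hε ↦ ?_
  have hmem : y - (c + ε) • a ∈ I := I.sub_mem hyI (I.smul_mem _ haI)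
  have hnot : ¬ 0 ≤ y - (c + ε) • a := fun h ↦ by linarith only [hc.2 (sub_nonneg.1 h), hε]
  have hle := (hI.nonpos_or_nonneg hmem).resolve_right hnot
  rwa [add_smul, ← sub_sub, sub_nonpos] at hle

end MinimalIdeal

namespace IsRieszIdeal

variable {E : Type*} [AddCommGroup E] [Lattice E] [Module ℝ E] [IsOrderedAddMonoid E]
  [IsOrderedModule ℝ E]

lemma exists_isRieszAtom_mem (harch : RieszArchimedean E) {I : Submodule ℝ E}
    [FiniteDimensional ℝ I] (hI : IsRieszIdeal I) (hne : I ≠ ⊥) : ∃ a ∈ I, IsRieszAtom a := by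
  obtain ⟨J, hJI, hJ⟩ := hI.exists_isMinimalRieszIdeal_le hne
  obtain ⟨x, hxJ, hx⟩ := Submodule.exists_mem_ne_zero_of_ne_bot hJ.1.2
  have haJ : |x| ∈ J := hJ.1.1.abs_mem hxJ
  have ha : 0 < |x| := (abs_nonneg x).lt_of_ne' (mt abs_eq_zero_iff.1 hx)
  exact ⟨|x|, hJI haJ, ha, fun y hy hyx ↦ hJ.exists_eq_smul harch ha haJ hy
    (hJ.1.1.mem_of_nonneg_of_le hy hyx haJ)⟩

theorem exists_finset_isRieszAtom_span_eq (harch : RieszArchimedean E) {I : Submodule ℝ E}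
    [FiniteDimensional ℝ I] (hI : IsRieszIdeal I) :
    ∃ s : Finset E, (∀ a ∈ s, IsRieszAtom a) ∧
      (s : Set E).Pairwise (fun a b ↦ a ∈ disjComplement {b}) ∧
      Submodule.span ℝ (s : Set E) = I := by
  classical
  induction hn : Module.finrank ℝ I using Nat.strong_induction_on generalizing I with
  | _ n ih =>
  rcases eq_or_ne I ⊥ with rfl | hne
  · exact ⟨∅, by simp⟩
  obtain ⟨a, haI, ha⟩ := hI.exists_isRieszAtom_mem harch hne
  let J := I ⊓ disjComplementSubmodule {a}
  have hlt : J < I := inf_le_left.lt_of_not_ge fun hle ↦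
    ha.pos.ne' (eq_zero_of_mem_disjComplement (Set.mem_singleton a) (hle haI).2)
  have : FiniteDimensional ℝ J := Submodule.finiteDimensional_of_le hlt.le
  obtain ⟨s, hatom, hdisj, hspan⟩ := ih _ (hn ▸ Submodule.finrank_lt_finrank_of_lt hlt)
    (hI.inf (isRieszIdeal_disjComplementSubmodule {a})) rfl
  have hsa : (s : Set E) ⊆ disjComplement {a} := fun b hb ↦
    (hspan.le (Submodule.subset_span hb)).2
  have has : a ∈ disjComplement (s : Set E) :=
    Set.singleton_subset_iff.1 (subset_disjComplement_comm.1 hsa)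
  refine ⟨insert a s, (Finset.forall_mem_insert ..).2 ⟨ha, hatom⟩, ?_, ?_⟩
  · rw [Finset.coe_insert]
    exact hdisj.insert fun b hb _ ↦
      ⟨mem_disjComplement_singleton.2 (has b hb), hsa hb⟩
  · rw [Finset.coe_insert, Submodule.span_insert, hspan, inf_comm,
      ← sup_inf_assoc_of_le _ ((Submodule.span_singleton_le_iff_mem a I).2 haI),
      ha.span_sup_disjComplementSubmodule_eq_top harch, top_inf_eq]

end IsRieszIdeal

/-- In an Archimedean Riesz space, every finite dimensional ideal is a projection band,
and moreover a principal band. -/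
theorem stmt5 {E : Type*} [AddCommGroup E] [Lattice E] [Module ℝ E]
    (hadd : ∀ x y z : E, x ≤ y → x + z ≤ y + z)
    (hsmul : ∀ (c : ℝ) (x : E), 0 ≤ c → 0 ≤ x → 0 ≤ c • x)
    (harch : RieszArchimedean E)
    (I : Submodule ℝ E) (hI : IsRieszIdeal I) (hfin : FiniteDimensional ℝ I) :
    IsProjectionBand I ∧ IsPrincipalBand I := by
  have : IsOrderedAddMonoid E := { add_le_add_left := fun x y hxy z ↦ hadd x y z hxy }
  have : IsOrderedModule ℝ E := .of_smul_nonneg fun c hc x hx ↦ hsmul c x hc hx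
  obtain ⟨s, hatom, hdisj, rfl⟩ := hI.exists_finset_isRieszAtom_span_eq harch
  have hproj := exists_mem_span_add_mem_disjComplement_of_isRieszAtom harch hatom hdisj
  have hband := hI.isBand_of_forall_exists_add hproj
  refine ⟨⟨hband, hproj⟩, hband, ∑ a ∈ s, a, ?_, fun C hC hsum ↦ ?_⟩
  · exact Submodule.sum_mem _ fun a ha ↦ Submodule.subset_span ha
  · exact hC.1.span_le_of_sum_mem (fun a ha ↦ (hatom a ha).pos.le) hsum
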